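/- Let H be a nonzero complex Hilbert space and let E be a bounded self-adjoint operator on H. Then for every ε > 0 there exists a bounded self-adjoint operator P on H with ‖P‖ ≤ ε such that the operator E + P has an eigenvalue λ ∈ ℝ with |λ| = ‖E + P‖, i.e. there exists u ∈ H with ‖u‖ = 1 and (E + P)u = λu. -/

import Mathlib

/-!
Truncating the spectrum of `E` turns its edge into an eigenvalue. If `‖E‖ ≤ ε`, take `P = -E`.
Otherwise put `δ = ‖E‖ - ε > 0`, let `f` be the clamp of `ℝ` to `[-δ, δ]`, and take `E + P = f(E)`,
by the continuous functional calculus. On the spectrum, which lies in `[-‖E‖, ‖E‖]`, the function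
`f(t) - t` is bounded by `ε`, so `‖P‖ ≤ ε`, and `‖f(E)‖ ≤ δ`. One of the points `σ ‖E‖` with
`σ = ±1` belongs to the spectrum; the function `g(t) = max (σ t - δ) 0` does not vanish there, so
`g(E) ≠ 0`. As `f` takes the value `σ δ` wherever `g ≠ 0`, one has `f(E) g(E) = σ δ g(E)`, and any
nonzero vector in the range of `g(E)` is an eigenvector of `f(E)` for `σ δ`. This forces
`‖f(E)‖ = δ`.
-/

/-- If `A B = c B` with `B ≠ 0`, the range of `B` contains a unit eigenvector of `A`. -/
lemma exists_unit_eigenvector_of_mul_eq {H : Type*} [NormedAddCommGroup H]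
    [InnerProductSpace ℂ H] {A B : H →L[ℂ] H} {c : ℝ} (hB : B ≠ 0) (h : A * B = c • B) :
    ∃ u : H, ‖u‖ = 1 ∧ A u = (c : ℂ) • u := by
  obtain ⟨v, hv⟩ : ∃ v, B v ≠ 0 := by
    by_contra! hv
    exact hB (ContinuousLinearMap.ext hv)
  have hAv : A (B v) = (c : ℂ) • B v := by
    simpa using congr($h v)
  refine ⟨((‖B v‖⁻¹ : ℝ) : ℂ) • B v, ?_, ?_⟩
  · simp [norm_smul, hv]
  · rw [map_smul, hAv, smul_comm]

/-- For every bounded self-adjoint operator `E` on a nonzero complex Hilbert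
space and every `ε > 0` there is a bounded self-adjoint perturbation `P` with `‖P‖ ≤ ε`
such that `E + P` has an eigenvalue `λ ∈ ℝ` with `|λ| = ‖E + P‖`. -/
theorem exists_selfAdjoint_perturbation_with_peripheral_eigenvalue
    {H : Type*} [NormedAddCommGroup H] [InnerProductSpace ℂ H] [CompleteSpace H]
    [Nontrivial H]
    (E : H →L[ℂ] H) (hE : IsSelfAdjoint E) (ε : ℝ) (hε : 0 < ε) :
    ∃ P : H →L[ℂ] H, IsSelfAdjoint P ∧ ‖P‖ ≤ ε ∧
      ∃ lam : ℝ, ∃ u : H, ‖u‖ = 1 ∧ (E + P) u = (lam : ℂ) • u ∧ |lam| = ‖E + P‖ := by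
  rcases le_or_gt ‖E‖ ε with hle | hlt
  · obtain ⟨u, hu⟩ := exists_norm_eq H zero_le_one
    exact ⟨-E, hE.neg, by simpa using hle, 0, u, hu, by simp, by simp⟩
  obtain ⟨δ, hδ⟩ : ∃ δ, δ = ‖E‖ - ε := ⟨_, rfl⟩
  have hδ0 : 0 < δ := by linarith
  have hspec : ∀ x ∈ spectrum ℝ E, |x| ≤ ‖E‖ := fun x hx ↦
    IsometricContinuousFunctionalCalculus.norm_spectrum_le E hx hE
  obtain ⟨σ, hσ, hσE⟩ : ∃ σ : ℝ, (σ = 1 ∨ σ = -1) ∧ σ * ‖E‖ ∈ spectrum ℝ E := by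
    obtain ⟨s, hs, hsE : |s| = ‖E‖⟩ :=
      (IsometricContinuousFunctionalCalculus.isGreatest_norm_spectrum (𝕜 := ℝ) E hE).1
    rcases abs_choice s with h | h
    · exact ⟨1, .inl rfl, by rwa [← hsE, h, one_mul]⟩
    · exact ⟨-1, .inr rfl, by rwa [← hsE, h, neg_one_mul, neg_neg]⟩
  let f : ℝ → ℝ := fun t ↦ max (-δ) (min δ t)
  let g : ℝ → ℝ := fun t ↦ max (σ * t - δ) 0
  have hf : Continuous f := by fun_prop
  have hg : Continuous g := by fun_prop
  have hEP : E + cfc (fun t ↦ f t - t) E = cfc f E := by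
    rw [cfc_sub f (fun t ↦ t) E hf.continuousOn, cfc_id' ℝ E hE]
    abel
  have hg0 : cfc g E ≠ 0 := by
    intro h0
    have hle := norm_apply_le_norm_cfc g E hσE hg.continuousOn hE
    have hσσ : σ * (σ * ‖E‖) = ‖E‖ := by rcases hσ with rfl | rfl <;> ring
    have hpos : g (σ * ‖E‖) = ε := by
      simp only [g, hσσ, hδ, sub_sub_cancel, max_eq_left hε.le]
    rw [h0, norm_zero, hpos, Real.norm_eq_abs, abs_of_pos hε] at hle
    linarith
  have hfg : cfc f E * cfc g E = (σ * δ) • cfc g E := by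
    rw [← cfc_mul f g E hf.continuousOn hg.continuousOn,
      ← cfc_const_mul (σ * δ) g E hg.continuousOn]
    congr 1
    funext t
    rcases le_total (σ * t - δ) 0 with ht | ht
    · simp [g, max_eq_right ht]
    · congr 1
      rcases hσ with rfl | rfl
      · simp only [f]
        rw [min_eq_left (by linarith), max_eq_right (by linarith), one_mul]
      · simp only [f]
        rw [min_eq_right (by linarith), max_eq_left (by linarith), neg_one_mul]
  obtain ⟨u, hu, hfu⟩ := exists_unit_eigenvector_of_mul_eq hg0 hfg
  have habs : |σ * δ| = δ := by
    rcases hσ with rfl | rfl <;> simp [abs_of_pos hδ0]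
  refine ⟨cfc (fun t ↦ f t - t) E, cfc_predicate _ E, ?_, σ * δ, u, hu, hEP ▸ hfu, ?_⟩
  · refine norm_cfc_le hε.le fun x hx ↦ ?_
    have hx' := abs_le.1 (hspec x hx)
    rw [Real.norm_eq_abs, abs_le]
    simp only [f]
    constructor <;> rcases max_cases (-δ) (min δ x) with h | h <;>
      rcases min_cases δ x with h' | h' <;> linarith
  · rw [hEP, habs]
    apply le_antisymm
    · have h := (cfc f E).le_opNorm u
      rwa [hfu, norm_smul, hu, mul_one, mul_one, Complex.norm_real, Real.norm_eq_abs, habs] at h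
    · refine norm_cfc_le hδ0.le fun x _ ↦ abs_le.2 ⟨le_max_left _ _, max_le ?_ (min_le_left _ _)⟩
      linarith
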